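/- arXiv:2111.13245 — 2 statements merged into one kernel-verified Lean document; each statement's English description precedes it below -/
import Mathlib

section
/- Let ψ : ℝ → ℝ be twice continuously differentiable and 2π-periodic with Fourier coefficients aₙ = ∫₀^{2π} ψ(x)·cos(nx) dx and bₙ = ∫₀^{2π} ψ(x)·sin(nx) dx, and set Ψ(t,x) := ∫₀^{2π} Φ(t, x−y)·ψ(y) dy for t > 0. Then for every t > 0 one has ∫₀^{2π} |Ψ(t,x) − ψ(x)|² dx = (1/π)·∑_{n=1}^∞ (1 − exp(−n²t))²·(aₙ² + bₙ²), and this quantity tends to 0 as t → 0⁺. -/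
open MeasureTheory Real Filter

/-- The one-dimensional periodic heat kernel
`Φ(t,x) = 1/(2π) + (1/π)·∑_{n=1}^∞ exp(−n²t)·cos(nx)`. -/
noncomputable def Φ (t x : ℝ) : ℝ :=
  1 / (2 * π) + (1 / π) * ∑' n : ℕ, Real.exp (-((n : ℝ) + 1) ^ 2 * t) * Real.cos (((n : ℝ) + 1) * x)

/-- `Ψ(t,x) = ∫₀^{2π} Φ(t,x−y)·ψ(y) dy`. -/
noncomputable def Ψ (ψ : ℝ → ℝ) (t x : ℝ) : ℝ :=
  ∫ y in (0 : ℝ)..(2 * π), Φ t (x - y) * ψ y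


lemma hs_int (F : ℕ → ℝ → ℝ) (u : ℕ → ℝ) (hF : ∀ n, Continuous (F n)) (hu : Summable u)
    (hb : ∀ n, ∀ x ∈ Set.Icc (0:ℝ) (2 * π), |F n x| ≤ u n) :
    HasSum (fun n => ∫ x in (0:ℝ)..(2 * π), F n x) (∫ x in (0:ℝ)..(2 * π), ∑' n, F n x) := by
  have hpi : (0:ℝ) ≤ 2 * π := by positivity
  refine intervalIntegral.hasSum_integral_of_dominated_convergence (fun n _ => u n)
    (fun n => (hF n).aestronglyMeasurable) ?_ ?_ ?_ ?_
  · intro n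
    refine Eventually.of_forall fun x hx => ?_
    rw [Set.uIoc_of_le hpi] at hx
    exact hb n x ⟨hx.1.le, hx.2⟩
  · exact Eventually.of_forall fun x hx => hu
  · exact intervalIntegrable_const
  · refine Eventually.of_forall fun x hx => ?_
    rw [Set.uIoc_of_le hpi] at hx
    exact (Summable.of_norm_bounded hu (fun n => hb n x ⟨hx.1.le, hx.2⟩)).hasSum

lemma int_cos (k : ℤ) (hk : k ≠ 0) : ∫ x in (0:ℝ)..(2 * π), Real.cos (k * x) = 0 := by
  have : (k:ℝ) ≠ 0 := by exact_mod_cast hk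
  rw [intervalIntegral.integral_comp_mul_left (fun x => Real.cos x) this, integral_cos]
  have h := Real.sin_int_mul_pi (2 * k)
  push_cast at h
  rw [show (k:ℝ) * (2 * π) = 2 * k * π by ring, h]
  simp

lemma int_sin (k : ℤ) : ∫ x in (0:ℝ)..(2 * π), Real.sin (k * x) = 0 := by
  by_cases hk : k = 0
  · simp [hk]
  have : (k:ℝ) ≠ 0 := by exact_mod_cast hk
  rw [intervalIntegral.integral_comp_mul_left (fun x => Real.sin x) this, integral_sin]
  rw [Real.cos_int_mul_two_pi]
  simp

lemma int_cos1 (n : ℕ) : ∫ x in (0:ℝ)..(2 * π), Real.cos (((n:ℝ) + 1) * x) = 0 := by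
  have := int_cos (n + 1) (by omega)
  push_cast at this
  exact this

lemma int_sin1 (n : ℕ) : ∫ x in (0:ℝ)..(2 * π), Real.sin (((n:ℝ) + 1) * x) = 0 := by
  have := int_sin (n + 1)
  push_cast at this
  exact this

lemma int_cos_sub (n m : ℕ) : ∫ x in (0:ℝ)..(2 * π), Real.cos (((n:ℝ) - m) * x)
    = if n = m then 2 * π else 0 := by
  split_ifs with h
  · simp [h]
  · have := int_cos ((n:ℤ) - m) (by omega)
    push_cast at this
    exact this

lemma int_cos_add (n m : ℕ) : ∫ x in (0:ℝ)..(2 * π), Real.cos (((n:ℝ) + m + 2) * x) = 0 := by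
  have := int_cos ((n:ℤ) + m + 2) (by omega)
  push_cast at this
  exact this

lemma int_sin_sub (n m : ℕ) : ∫ x in (0:ℝ)..(2 * π), Real.sin (((n:ℝ) - m) * x) = 0 := by
  have := int_sin ((n:ℤ) - m)
  push_cast at this
  exact this

lemma int_sin_add (n m : ℕ) : ∫ x in (0:ℝ)..(2 * π), Real.sin (((n:ℝ) + m + 2) * x) = 0 := by
  have := int_sin ((n:ℤ) + m + 2)
  push_cast at this
  exact this

lemma cc (n m : ℕ) (p q : ℝ) :
    ∫ x in (0:ℝ)..(2 * π), (p * Real.cos (((n:ℝ) + 1) * x) + q * Real.sin (((n:ℝ) + 1) * x))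
      * Real.cos (((m:ℝ) + 1) * x) = if n = m then π * p else 0 := by
  have h : ∀ x : ℝ, (p * Real.cos (((n:ℝ) + 1) * x) + q * Real.sin (((n:ℝ) + 1) * x))
      * Real.cos (((m:ℝ) + 1) * x) =
      (p / 2 * Real.cos (((n:ℝ) - m) * x) + p / 2 * Real.cos (((n:ℝ) + m + 2) * x))
      + (q / 2 * Real.sin (((n:ℝ) - m) * x) + q / 2 * Real.sin (((n:ℝ) + m + 2) * x)) := by
    intro x
    rw [show ((n:ℝ) - m) * x = ((n:ℝ) + 1) * x - ((m:ℝ) + 1) * x by ring,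
      show ((n:ℝ) + m + 2) * x = ((n:ℝ) + 1) * x + ((m:ℝ) + 1) * x by ring,
      Real.cos_sub, Real.cos_add, Real.sin_sub, Real.sin_add]
    ring
  simp_rw [h]
  rw [intervalIntegral.integral_add, intervalIntegral.integral_add, intervalIntegral.integral_add]
  · simp only [intervalIntegral.integral_const_mul, int_cos_sub, int_cos_add, int_sin_sub,
      int_sin_add]
    split_ifs <;> ring
  all_goals exact Continuous.intervalIntegrable (by fun_prop) _ _

lemma cs (n m : ℕ) (p q : ℝ) :
    ∫ x in (0:ℝ)..(2 * π), (p * Real.cos (((n:ℝ) + 1) * x) + q * Real.sin (((n:ℝ) + 1) * x))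
      * Real.sin (((m:ℝ) + 1) * x) = if n = m then π * q else 0 := by
  have h : ∀ x : ℝ, (p * Real.cos (((n:ℝ) + 1) * x) + q * Real.sin (((n:ℝ) + 1) * x))
      * Real.sin (((m:ℝ) + 1) * x) =
      (q / 2 * Real.cos (((n:ℝ) - m) * x) + -q / 2 * Real.cos (((n:ℝ) + m + 2) * x))
      + (-p / 2 * Real.sin (((n:ℝ) - m) * x) + p / 2 * Real.sin (((n:ℝ) + m + 2) * x)) := by
    intro x
    rw [show ((n:ℝ) - m) * x = ((n:ℝ) + 1) * x - ((m:ℝ) + 1) * x by ring,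
      show ((n:ℝ) + m + 2) * x = ((n:ℝ) + 1) * x + ((m:ℝ) + 1) * x by ring,
      Real.cos_sub, Real.cos_add, Real.sin_sub, Real.sin_add]
    ring
  simp_rw [h]
  rw [intervalIntegral.integral_add, intervalIntegral.integral_add, intervalIntegral.integral_add]
  · simp only [intervalIntegral.integral_const_mul, int_cos_sub, int_cos_add, int_sin_sub,
      int_sin_add]
    split_ifs <;> ring
  all_goals exact Continuous.intervalIntegrable (by fun_prop) _ _

lemma c1 (n : ℕ) (p q : ℝ) :
    ∫ x in (0:ℝ)..(2 * π), (p * Real.cos (((n:ℝ) + 1) * x) + q * Real.sin (((n:ℝ) + 1) * x))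
      = 0 := by
  rw [intervalIntegral.integral_add]
  · simp only [intervalIntegral.integral_const_mul, int_cos1, int_sin1]
    ring
  all_goals exact Continuous.intervalIntegrable (by fun_prop) _ _

lemma trig_bound (p q y : ℝ) : |p * Real.cos y + q * Real.sin y| ≤ |p| + |q| := by
  refine (abs_add_le _ _).trans ?_
  rw [abs_mul, abs_mul]
  have h1 := Real.abs_cos_le_one y
  have h2 := Real.abs_sin_le_one y
  have := abs_nonneg p
  have := abs_nonneg q
  nlinarith

lemma ser_cont (p q : ℕ → ℝ) (hp : Summable fun n => |p n|) (hq : Summable fun n => |q n|) :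
    Continuous fun x : ℝ => ∑' n : ℕ,
      (p n * Real.cos (((n:ℝ) + 1) * x) + q n * Real.sin (((n:ℝ) + 1) * x)) :=
  continuous_tsum (fun n => by fun_prop) (hp.add hq) fun n x => trig_bound _ _ _

lemma ser_int (p q : ℕ → ℝ) (hp : Summable fun n => |p n|) (hq : Summable fun n => |q n|)
    (c : ℝ) (h : ℝ → ℝ) (hc : Continuous h) (hh : ∀ x, |h x| ≤ 1) :
    ∫ x in (0:ℝ)..(2 * π), (c + ∑' n : ℕ,
      (p n * Real.cos (((n:ℝ) + 1) * x) + q n * Real.sin (((n:ℝ) + 1) * x))) * h x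
    = c * (∫ x in (0:ℝ)..(2 * π), h x) + ∑' n : ℕ, ∫ x in (0:ℝ)..(2 * π),
      (p n * Real.cos (((n:ℝ) + 1) * x) + q n * Real.sin (((n:ℝ) + 1) * x)) * h x := by
  have hS := ser_cont p q hp hq
  rw [(hs_int (fun n x => (p n * Real.cos (((n:ℝ) + 1) * x)
    + q n * Real.sin (((n:ℝ) + 1) * x)) * h x) (fun n => |p n| + |q n|)
    (fun n => by fun_prop) (hp.add hq) ?_).tsum_eq]
  · simp_rw [tsum_mul_right, add_mul c]
    rw [intervalIntegral.integral_add, intervalIntegral.integral_const_mul]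
    all_goals exact Continuous.intervalIntegrable (by fun_prop) _ _
  · intro n x _
    rw [abs_mul]
    have h1 := trig_bound (p n) (q n) (((n:ℝ) + 1) * x)
    have h2 := abs_nonneg (p n * Real.cos (((n:ℝ) + 1) * x) + q n * Real.sin (((n:ℝ) + 1) * x))
    have h3 := hh x
    nlinarith [abs_nonneg (h x)]

lemma coeff_norm (f : ℝ → ℝ) (hf : Continuous f) (k : ℤ) (h : (0:ℝ) < 2 * π) :
    ‖fourierCoeffOn h (fun x => (f x : ℂ)) k‖ ^ 2 = 1 / (4 * π ^ 2) *
      ((∫ x in (0:ℝ)..(2 * π), f x * Real.cos (k * x)) ^ 2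
        + (∫ x in (0:ℝ)..(2 * π), f x * Real.sin (k * x)) ^ 2) := by
  rw [fourierCoeffOn_eq_integral]
  have e : ∀ x : ℝ, fourier (-k) (x : AddCircle (2 * π - 0)) • (f x : ℂ)
      = ((f x * Real.cos (k * x) : ℝ) : ℂ) + ((-(f x * Real.sin (k * x)) : ℝ) : ℂ) * Complex.I := by
    intro x
    rw [fourier_coe_apply]
    have : (2 * π * Complex.I * ((-k : ℤ) : ℂ) * x / ((2 * π - 0 : ℝ) : ℂ) : ℂ)
        = ((-(k * x) : ℝ) : ℂ) * Complex.I := by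
      have : (π : ℂ) ≠ 0 := by exact_mod_cast Real.pi_ne_zero
      push_cast
      field_simp
      ring
    rw [this, Complex.exp_mul_I, ← Complex.ofReal_cos, ← Complex.ofReal_sin, Real.cos_neg,
      Real.sin_neg, smul_eq_mul]
    push_cast
    ring
  simp_rw [e]
  rw [intervalIntegral.integral_add, intervalIntegral.integral_mul_const,
    intervalIntegral.integral_ofReal, intervalIntegral.integral_ofReal,
    intervalIntegral.integral_neg, norm_smul, mul_pow, ← Complex.normSq_eq_norm_sq,
    Complex.normSq_add_mul_I, Real.norm_eq_abs, sq_abs]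
  · field_simp
    ring
  all_goals exact Continuous.intervalIntegrable (by fun_prop) _ _

lemma psi_bound (ψ : ℝ → ℝ) (hψ : Continuous ψ) :
    ∃ M, 0 ≤ M ∧ ∀ x ∈ Set.Icc (0:ℝ) (2 * π), |ψ x| ≤ M := by
  obtain ⟨M, hM⟩ := isCompact_Icc.exists_bound_of_continuousOn
    (s := Set.Icc (0:ℝ) (2 * π)) hψ.continuousOn
  have h : (0:ℝ) ≤ 2 * π := by positivity
  exact ⟨M, (norm_nonneg _).trans (hM 0 ⟨le_rfl, h⟩), hM⟩

lemma parseval (f : ℝ → ℝ) (hf : Continuous f) :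
    HasSum (fun n : ℕ => (∫ x in (0:ℝ)..(2 * π), f x * Real.cos (((n:ℝ) + 1) * x)) ^ 2
        + (∫ x in (0:ℝ)..(2 * π), f x * Real.sin (((n:ℝ) + 1) * x)) ^ 2)
      (π * (∫ x in (0:ℝ)..(2 * π), |f x| ^ 2) - (∫ x in (0:ℝ)..(2 * π), f x) ^ 2 / 2) := by
  have h : (0:ℝ) < 2 * π := by positivity
  have hc : Continuous fun x => (f x : ℂ) := by fun_prop
  have hL : MemLp (fun x => (f x : ℂ)) 2 (volume.restrict (Set.Ioc 0 (2 * π))) := by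
    obtain ⟨M, hM0, hM⟩ := psi_bound f hf
    refine MemLp.of_bound hc.aestronglyMeasurable M ?_
    filter_upwards [ae_restrict_mem measurableSet_Ioc] with x hx
    rw [Complex.norm_real]
    exact hM x ⟨hx.1.le, hx.2⟩
  have H := (hasSum_sq_fourierCoeffOn h hL).nat_add_neg
  rw [← hasSum_nat_add_iff' 1] at H
  have H2 := H.mul_left (2 * π ^ 2)
  simp only [coeff_norm f hf] at H2
  refine (congrArg₂ (fun u v => HasSum u v) ?_ ?_).mp H2
  · funext n
    push_cast
    simp only [neg_mul, Real.cos_neg, Real.sin_neg, mul_neg, intervalIntegral.integral_neg]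
    field_simp
    ring
  · simp
    field_simp
    ring

lemma exp_summable (t : ℝ) (ht : 0 < t) :
    Summable fun n : ℕ => Real.exp (-((n : ℝ) + 1) ^ 2 * t) := by
  refine Summable.of_nonneg_of_le (fun n => (Real.exp_pos _).le) (fun n => ?_)
    (Real.summable_exp_nat_mul_iff.2 (neg_lt_zero.2 ht))
  apply Real.exp_le_exp.2
  have : (0:ℝ) ≤ n := n.cast_nonneg
  nlinarith [mul_nonneg this ht.le, mul_nonneg (mul_nonneg this this) ht.le]

lemma coef_bound (ψ h : ℝ → ℝ) (M : ℝ) (hM0 : 0 ≤ M)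
    (hM : ∀ x ∈ Set.Icc (0:ℝ) (2 * π), |ψ x| ≤ M) (hh : ∀ x, |h x| ≤ 1) :
    |∫ x in (0:ℝ)..(2 * π), ψ x * h x| ≤ M * (2 * π) := by
  have hpi : (0:ℝ) ≤ 2 * π := by positivity
  have := intervalIntegral.norm_integral_le_of_norm_le_const (a := 0) (b := 2 * π) (C := M)
    (f := fun x => ψ x * h x) ?_
  · simpa [abs_of_nonneg, Real.pi_pos.le] using this
  · intro x hx
    rw [Set.uIoc_of_le hpi] at hx
    have h1 := hM x ⟨hx.1.le, hx.2⟩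
    rw [Real.norm_eq_abs, abs_mul]
    nlinarith [hh x, abs_nonneg (h x), abs_nonneg (ψ x)]

lemma Psi_eq (ψ : ℝ → ℝ) (hψ : Continuous ψ) (t : ℝ) (ht : 0 < t) (x : ℝ) :
    Ψ ψ t x = (∫ y in (0:ℝ)..(2 * π), ψ y) / (2 * π) + ∑' n : ℕ,
      ((1 / π * Real.exp (-((n : ℝ) + 1) ^ 2 * t) *
          ∫ y in (0:ℝ)..(2 * π), ψ y * Real.cos (((n:ℝ) + 1) * y)) * Real.cos (((n:ℝ) + 1) * x)
       + (1 / π * Real.exp (-((n : ℝ) + 1) ^ 2 * t) *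
          ∫ y in (0:ℝ)..(2 * π), ψ y * Real.sin (((n:ℝ) + 1) * y)) * Real.sin (((n:ℝ) + 1) * x)) := by
  obtain ⟨M, hM0, hM⟩ := psi_bound ψ hψ
  have hE := exp_summable t ht
  have key := hs_int (fun n y => 1 / π * (Real.exp (-((n : ℝ) + 1) ^ 2 * t) *
      Real.cos (((n : ℝ) + 1) * (x - y))) * ψ y)
      (fun n => 1 / π * Real.exp (-((n : ℝ) + 1) ^ 2 * t) * M) (fun n => by fun_prop)
      ((hE.mul_left _).mul_right _) ?_
  · have hc : Continuous fun y : ℝ => ∑' n : ℕ, Real.exp (-((n : ℝ) + 1) ^ 2 * t) *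
        Real.cos (((n : ℝ) + 1) * (x - y)) := by
      refine continuous_tsum (fun n => by fun_prop) hE fun n y => ?_
      rw [Real.norm_eq_abs, abs_mul, abs_of_pos (Real.exp_pos _)]
      exact mul_le_of_le_one_right (Real.exp_pos _).le (Real.abs_cos_le_one _)
    unfold Ψ Φ
    simp_rw [tsum_mul_right, tsum_mul_left] at key
    simp_rw [add_mul (1 / (2 * π))]
    rw [intervalIntegral.integral_add, intervalIntegral.integral_const_mul, ← key.tsum_eq]
    · congr 1
      · ring
      · congr 1
        funext n
        have e : ∀ y, 1 / π * (Real.exp (-((n : ℝ) + 1) ^ 2 * t) *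
            Real.cos (((n : ℝ) + 1) * (x - y))) * ψ y
            = (1 / π * Real.exp (-((n : ℝ) + 1) ^ 2 * t) * Real.cos (((n:ℝ) + 1) * x)) *
              (ψ y * Real.cos (((n:ℝ) + 1) * y))
            + (1 / π * Real.exp (-((n : ℝ) + 1) ^ 2 * t) * Real.sin (((n:ℝ) + 1) * x)) *
              (ψ y * Real.sin (((n:ℝ) + 1) * y)) := by
          intro y
          rw [mul_sub, Real.cos_sub]
          ring
        simp_rw [e]
        rw [intervalIntegral.integral_add, intervalIntegral.integral_const_mul,
          intervalIntegral.integral_const_mul]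
        · ring
        all_goals exact Continuous.intervalIntegrable (by fun_prop) _ _
    all_goals exact Continuous.intervalIntegrable (by fun_prop) _ _
  · intro n y hy
    have h1 := hM y hy
    have hpi : 0 < 1 / π := by positivity
    rw [abs_mul, abs_mul, abs_mul, abs_of_pos (Real.exp_pos _), abs_of_pos hpi]
    gcongr
    exact mul_le_of_le_one_right (Real.exp_pos _).le (Real.abs_cos_le_one _)

/-- If `ψ : ℝ → ℝ` is `C²` and `2π`-periodic, with Fourier coefficients
`aₙ = ∫₀^{2π} ψ(x)·cos(nx) dx` and `bₙ = ∫₀^{2π} ψ(x)·sin(nx) dx` (here `a k` is the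
coefficient of frequency `k+1`), then for every `t > 0`,
`∫₀^{2π} |Ψ(t,x) − ψ(x)|² dx = (1/π)·∑_{n=1}^∞ (1 − exp(−n²t))²·(aₙ² + bₙ²)`, and this
quantity tends to `0` as `t → 0⁺`. -/
theorem statement_13 (ψ : ℝ → ℝ) (hψ : ContDiff ℝ 2 ψ) (hper : ∀ x : ℝ, ψ (x + 2 * π) = ψ x)
    (a b : ℕ → ℝ)
    (ha : ∀ n : ℕ, a n = ∫ x in (0 : ℝ)..(2 * π), ψ x * Real.cos (((n : ℝ) + 1) * x))
    (hb : ∀ n : ℕ, b n = ∫ x in (0 : ℝ)..(2 * π), ψ x * Real.sin (((n : ℝ) + 1) * x)) :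
    (∀ t : ℝ, 0 < t →
      (∫ x in (0 : ℝ)..(2 * π), |Ψ ψ t x - ψ x| ^ 2)
        = (1 / π) * ∑' n : ℕ,
            (1 - Real.exp (-((n : ℝ) + 1) ^ 2 * t)) ^ 2 * ((a n) ^ 2 + (b n) ^ 2)) ∧
    Tendsto (fun t : ℝ => ∫ x in (0 : ℝ)..(2 * π), |Ψ ψ t x - ψ x| ^ 2)
      (nhdsWithin 0 (Set.Ioi 0)) (nhds 0) := by
  have hc : Continuous ψ := hψ.continuous
  have main : ∀ t : ℝ, 0 < t →
      (∫ x in (0 : ℝ)..(2 * π), |Ψ ψ t x - ψ x| ^ 2)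
        = (1 / π) * ∑' n : ℕ,
            (1 - Real.exp (-((n : ℝ) + 1) ^ 2 * t)) ^ 2 * ((a n) ^ 2 + (b n) ^ 2) := by
    intro t ht
    obtain ⟨M, hM0, hM⟩ := psi_bound ψ hc
    have hE := exp_summable t ht
    have hpi : 0 < 1 / π := by positivity
    have hp : Summable fun n : ℕ => |1 / π * Real.exp (-((n : ℝ) + 1) ^ 2 * t) * a n| := by
      refine Summable.of_nonneg_of_le (fun n => abs_nonneg _) (fun n => ?_)
        ((hE.mul_left (1 / π)).mul_right (M * (2 * π)))
      rw [abs_mul, abs_mul, abs_of_pos (Real.exp_pos _), abs_of_pos hpi]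
      gcongr
      rw [ha]
      exact coef_bound ψ _ M hM0 hM fun x => Real.abs_cos_le_one _
    have hq : Summable fun n : ℕ => |1 / π * Real.exp (-((n : ℝ) + 1) ^ 2 * t) * b n| := by
      refine Summable.of_nonneg_of_le (fun n => abs_nonneg _) (fun n => ?_)
        ((hE.mul_left (1 / π)).mul_right (M * (2 * π)))
      rw [abs_mul, abs_mul, abs_of_pos (Real.exp_pos _), abs_of_pos hpi]
      gcongr
      rw [hb]
      exact coef_bound ψ _ M hM0 hM fun x => Real.abs_sin_le_one _
    have hPsi := Psi_eq ψ hc t ht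
    simp_rw [← ha, ← hb] at hPsi
    have hPc : Continuous fun x => Ψ ψ t x := by
      simp_rw [hPsi]
      exact continuous_const.add (ser_cont _ _ hp hq)
    have I0 : ∫ x in (0:ℝ)..(2 * π), (Ψ ψ t x - ψ x) = 0 := by
      rw [intervalIntegral.integral_sub (hPc.intervalIntegrable _ _) (hc.intervalIntegrable _ _)]
      have := ser_int _ _ hp hq ((∫ y in (0:ℝ)..(2 * π), ψ y) / (2 * π)) (fun _ => 1)
        continuous_const (by simp)
      simp only [← hPsi, mul_one, c1] at this
      rw [this]
      simp
      try ring
    have I1 : ∀ m : ℕ, ∫ x in (0:ℝ)..(2 * π), (Ψ ψ t x - ψ x) * Real.cos (((m:ℝ) + 1) * x)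
        = (Real.exp (-((m : ℝ) + 1) ^ 2 * t) - 1) * a m := by
      intro m
      simp_rw [sub_mul]
      rw [intervalIntegral.integral_sub
        (Continuous.intervalIntegrable (by fun_prop) _ _)
        (Continuous.intervalIntegrable (by fun_prop) _ _)]
      have := ser_int _ _ hp hq ((∫ y in (0:ℝ)..(2 * π), ψ y) / (2 * π))
        (fun x => Real.cos (((m:ℝ) + 1) * x)) (by fun_prop) (fun x => Real.abs_cos_le_one _)
      simp only [← hPsi, cc, int_cos1, tsum_ite_eq] at this
      rw [this, ← ha]
      field_simp
      ring
    have I2 : ∀ m : ℕ, ∫ x in (0:ℝ)..(2 * π), (Ψ ψ t x - ψ x) * Real.sin (((m:ℝ) + 1) * x)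
        = (Real.exp (-((m : ℝ) + 1) ^ 2 * t) - 1) * b m := by
      intro m
      simp_rw [sub_mul]
      rw [intervalIntegral.integral_sub
        (Continuous.intervalIntegrable (by fun_prop) _ _)
        (Continuous.intervalIntegrable (by fun_prop) _ _)]
      have := ser_int _ _ hp hq ((∫ y in (0:ℝ)..(2 * π), ψ y) / (2 * π))
        (fun x => Real.sin (((m:ℝ) + 1) * x)) (by fun_prop) (fun x => Real.abs_sin_le_one _)
      simp only [← hPsi, cs, int_sin1, tsum_ite_eq] at this
      rw [this, ← hb]
      field_simp
      ring
    have P := (parseval (fun x => Ψ ψ t x - ψ x) (hPc.sub hc)).tsum_eq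
    simp only [I0, I1, I2] at P
    have e : ∀ n : ℕ, (1 - Real.exp (-((n : ℝ) + 1) ^ 2 * t)) ^ 2 * ((a n) ^ 2 + (b n) ^ 2)
        = ((Real.exp (-((n : ℝ) + 1) ^ 2 * t) - 1) * a n) ^ 2
          + ((Real.exp (-((n : ℝ) + 1) ^ 2 * t) - 1) * b n) ^ 2 := fun n => by ring
    simp_rw [e]
    rw [P]
    field_simp
    ring
  refine ⟨main, ?_⟩
  have hS := (parseval ψ hc).summable
  simp_rw [← ha, ← hb] at hS
  have T : Tendsto (fun t : ℝ => ∑' n : ℕ,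
      (1 - Real.exp (-((n : ℝ) + 1) ^ 2 * t)) ^ 2 * ((a n) ^ 2 + (b n) ^ 2))
      (nhdsWithin 0 (Set.Ioi 0)) (nhds (∑' n : ℕ, (0:ℝ))) := by
    refine tendsto_tsum_of_dominated_convergence hS (fun n => ?_) ?_
    · have : Continuous fun t : ℝ =>
          (1 - Real.exp (-((n : ℝ) + 1) ^ 2 * t)) ^ 2 * ((a n) ^ 2 + (b n) ^ 2) := by fun_prop
      have h := this.tendsto 0
      simp only [mul_zero, Real.exp_zero, sub_self, ne_eq, OfNat.ofNat_ne_zero,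
        not_false_eq_true, zero_pow, zero_mul] at h
      exact h.mono_left nhdsWithin_le_nhds
    · filter_upwards [self_mem_nhdsWithin] with t ht n
      have ht' : 0 < t := ht
      have h1 := Real.exp_pos (-((n : ℝ) + 1) ^ 2 * t)
      have h2 : Real.exp (-((n : ℝ) + 1) ^ 2 * t) ≤ 1 := by
        apply Real.exp_le_one_iff.2
        have : 0 ≤ ((n:ℝ) + 1) ^ 2 * t := by positivity
        linarith
      rw [Real.norm_eq_abs, abs_of_nonneg (by positivity)]
      refine mul_le_of_le_one_left (by positivity) ?_
      nlinarith
  have T2 := T.const_mul (1 / π)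
  simp only [tsum_zero, mul_zero] at T2
  refine T2.congr' ?_
  filter_upwards [self_mem_nhdsWithin] with t ht
  exact (main t ht).symm
end

section
/- The three-dimensional periodic heat kernel Φ̃ is infinitely differentiable on (0,∞) × ℝ³, is 2π-periodic in each of the three space variables, and satisfies the heat equation ∂ₜΦ̃(t,x) = ΔΦ̃(t,x) pointwise on (0,∞) × ℝ³, where Δ denotes the Laplacian in the three space variables. -/
open MeasureTheory Real Filter

/-- The three-dimensional periodic heat kernel `Φ̃(t,x) = Φ(t,x₁)·Φ(t,x₂)·Φ(t,x₃)`. -/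
noncomputable def Φ₃ (t x₁ x₂ x₃ : ℝ) : ℝ := Φ t x₁ * Φ t x₂ * Φ t x₃


/-- Termwise-differentiated family of series. -/
noncomputable def heatTerm (k : ℕ) (c : ℝ) (n : ℕ) (p : ℝ × ℝ) : ℝ :=
  ((n : ℝ) + 1) ^ k * (Real.exp (-((n : ℝ) + 1) ^ 2 * p.1) * Real.cos (((n : ℝ) + 1) * p.2 + c))

noncomputable def heatSum (k : ℕ) (c : ℝ) (p : ℝ × ℝ) : ℝ := ∑' n : ℕ, heatTerm k c n p

lemma heat_bound_summable (k : ℕ) {ε : ℝ} (hε : 0 < ε) :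
    Summable (fun n : ℕ => ((n : ℝ) + 1) ^ k * Real.exp (-((n : ℝ) + 1) ^ 2 * ε)) := by
  have h := (summable_nat_add_iff 1).2 (Real.summable_pow_mul_exp_neg_nat_mul k hε)
  refine Summable.of_nonneg_of_le (fun n => by positivity) (fun n => ?_) h
  push_cast
  have hn : (0 : ℝ) ≤ n := n.cast_nonneg
  refine mul_le_mul_of_nonneg_left (Real.exp_le_exp.2 ?_) (by positivity)
  nlinarith [mul_nonneg hn hε.le, mul_nonneg (mul_nonneg hn hn) hε.le]

lemma heatTerm_norm_le (k : ℕ) (c : ℝ) (n : ℕ) {ε : ℝ} (p : ℝ × ℝ) (hp : ε < p.1) :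
    ‖heatTerm k c n p‖ ≤ ((n : ℝ) + 1) ^ k * Real.exp (-((n : ℝ) + 1) ^ 2 * ε) := by
  have hn : (0 : ℝ) ≤ n := n.cast_nonneg
  rw [heatTerm, norm_mul, norm_mul, Real.norm_of_nonneg (by positivity : (0 : ℝ) ≤ ((n : ℝ) + 1) ^ k),
    Real.norm_of_nonneg (Real.exp_pos _).le]
  gcongr
  calc _ ≤ Real.exp (-((n : ℝ) + 1) ^ 2 * p.1) * 1 := by
        gcongr
        exact Real.abs_cos_le_one _
    _ ≤ _ := by
        rw [mul_one]
        apply Real.exp_le_exp.2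
        nlinarith [sq_nonneg ((n : ℝ) + 1)]

lemma heatTerm_summable (k : ℕ) (c : ℝ) (p : ℝ × ℝ) (hp : 0 < p.1) :
    Summable (fun n => heatTerm k c n p) :=
  Summable.of_norm_bounded (heat_bound_summable k (half_pos hp))
    (fun n => heatTerm_norm_le k c n p (half_lt_self hp))

lemma heatTerm_hasFDerivAt (k : ℕ) (c : ℝ) (n : ℕ) (p : ℝ × ℝ) :
    HasFDerivAt (heatTerm k c n)
      ((-heatTerm (k + 2) c n p) • ContinuousLinearMap.fst ℝ ℝ ℝ
        + heatTerm (k + 1) (c + π / 2) n p • ContinuousLinearMap.snd ℝ ℝ ℝ) p := by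
  have h1 : HasFDerivAt (fun p : ℝ × ℝ => p.1) (ContinuousLinearMap.fst ℝ ℝ ℝ) p := hasFDerivAt_fst
  have h2 : HasFDerivAt (fun p : ℝ × ℝ => p.2) (ContinuousLinearMap.snd ℝ ℝ ℝ) p := hasFDerivAt_snd
  have := (((h1.const_mul (-((n : ℝ) + 1) ^ 2)).exp.mul
    (((h2.const_mul ((n : ℝ) + 1)).add_const c).cos)).const_mul (((n : ℝ) + 1) ^ k))
  refine this.congr_fderiv ?_
  have hc : ∀ y, Real.cos (y + (c + π / 2)) = - Real.sin (y + c) := by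
    intro y
    rw [← add_assoc, Real.cos_add_pi_div_two]
  ext <;> simp [heatTerm, hc] <;> ring

lemma heatSum_hasFDerivAt (k : ℕ) (c : ℝ) (p : ℝ × ℝ) (hp : 0 < p.1) :
    HasFDerivAt (heatSum k c)
      ((-heatSum (k + 2) c p) • ContinuousLinearMap.fst ℝ ℝ ℝ
        + heatSum (k + 1) (c + π / 2) p • ContinuousLinearMap.snd ℝ ℝ ℝ) p := by
  have hS : IsOpen {q : ℝ × ℝ | p.1 / 2 < q.1} := isOpen_lt continuous_const continuous_fst
  have hC : Convex ℝ {q : ℝ × ℝ | p.1 / 2 < q.1} := by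
    have := (convex_Ioi (p.1 / 2)).linear_preimage (LinearMap.fst ℝ ℝ ℝ)
    exact this
  have hpS : p ∈ {q : ℝ × ℝ | p.1 / 2 < q.1} := half_lt_self hp
  have key := hasFDerivAt_tsum_of_isPreconnected
    ((heat_bound_summable (k + 2) (half_pos hp)).add (heat_bound_summable (k + 1) (half_pos hp)))
    hS hC.isPreconnected
    (fun n q _ => heatTerm_hasFDerivAt k c n q) (fun n q hq => ?_) hpS
    (heatTerm_summable k c p hp) hpS
  · refine key.congr_fderiv ?_
    have s1 := heatTerm_summable (k + 2) c p hp
    have s2 := heatTerm_summable (k + 1) (c + π / 2) p hp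
    rw [Summable.tsum_add (s1.neg.smul_const _) (s2.smul_const _), s1.neg.tsum_smul_const,
      s2.tsum_smul_const, tsum_neg]
    rfl
  · refine (norm_add_le _ _).trans ?_
    rw [norm_smul, norm_smul, norm_neg]
    refine add_le_add ?_ ?_
    · calc _ ≤ ‖heatTerm (k + 2) c n q‖ * 1 := by
            gcongr
            exact ContinuousLinearMap.norm_fst_le ℝ ℝ ℝ
        _ ≤ _ := by
            rw [mul_one]
            exact heatTerm_norm_le _ _ _ _ hq
    · calc _ ≤ ‖heatTerm (k + 1) (c + π / 2) n q‖ * 1 := by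
            gcongr
            exact ContinuousLinearMap.norm_snd_le ℝ ℝ ℝ
        _ ≤ _ := by
            rw [mul_one]
            exact heatTerm_norm_le _ _ _ _ hq

lemma heatSum_contDiffOn_nat (m : ℕ) : ∀ (k : ℕ) (c : ℝ),
    ContDiffOn ℝ m (heatSum k c) {p : ℝ × ℝ | 0 < p.1} := by
  have hS : IsOpen {q : ℝ × ℝ | 0 < q.1} := isOpen_lt continuous_const continuous_fst
  induction m with
  | zero =>
    intro k c
    exact contDiffOn_zero.2 fun p hp =>
      (heatSum_hasFDerivAt k c p hp).continuousAt.continuousWithinAt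
  | succ m ih =>
    intro k c
    push_cast
    rw [contDiffOn_succ_iff_fderiv_of_isOpen hS]
    refine ⟨fun p hp => (heatSum_hasFDerivAt k c p hp).differentiableAt.differentiableWithinAt,
      by simp, ?_⟩
    refine ContDiffOn.congr ?_ (fun p hp => (heatSum_hasFDerivAt k c p hp).fderiv)
    exact ((ih _ _).neg.smul contDiffOn_const).add ((ih _ _).smul contDiffOn_const)

lemma heatSum_contDiffOn (k : ℕ) (c : ℝ) :
    ContDiffOn ℝ (⊤ : ℕ∞) (heatSum k c) {p : ℝ × ℝ | 0 < p.1} :=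
  contDiffOn_infty.2 fun m => heatSum_contDiffOn_nat m k c

lemma Φ_eq (t x : ℝ) : Φ t x = 1 / (2 * π) + (1 / π) * heatSum 0 0 (t, x) := by
  simp [Φ, heatSum, heatTerm]

lemma heatSum_hasDerivAt_fst (k : ℕ) (c t x : ℝ) (ht : 0 < t) :
    HasDerivAt (fun s => heatSum k c (s, x)) (-heatSum (k + 2) c (t, x)) t := by
  have h := (heatSum_hasFDerivAt k c (t, x) ht).comp_hasDerivAt t
    ((hasDerivAt_id t).prodMk (hasDerivAt_const t x))
  simpa [Function.comp_def] using h

lemma heatSum_hasDerivAt_snd (k : ℕ) (c t x : ℝ) (ht : 0 < t) :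
    HasDerivAt (fun y => heatSum k c (t, y)) (heatSum (k + 1) (c + π / 2) (t, x)) x := by
  have h := (heatSum_hasFDerivAt k c (t, x) ht).comp_hasDerivAt x
    ((hasDerivAt_const x t).prodMk (hasDerivAt_id x))
  simpa [Function.comp_def] using h

lemma heatSum_add_pi (k : ℕ) (c : ℝ) (p : ℝ × ℝ) : heatSum k (c + π) p = -heatSum k c p := by
  simp only [heatSum, heatTerm]
  rw [← tsum_neg]
  congr 1
  ext n
  rw [← add_assoc, Real.cos_add_pi]
  ring

lemma Φ_hasDerivAt_t (t x : ℝ) (ht : 0 < t) :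
    HasDerivAt (fun s => Φ s x) (-(1 / π * heatSum 2 0 (t, x))) t := by
  simp only [Φ_eq]
  refine (((heatSum_hasDerivAt_fst 0 0 t x ht).const_mul (1 / π)).const_add _).congr_deriv ?_
  ring

lemma Φ_hasDerivAt_x (t x : ℝ) (ht : 0 < t) :
    HasDerivAt (fun y => Φ t y) (1 / π * heatSum 1 (π / 2) (t, x)) x := by
  simp only [Φ_eq]
  have := ((heatSum_hasDerivAt_snd 0 0 t x ht).const_mul (1 / π)).const_add (1 / (2 * π))
  simpa only [zero_add] using this

lemma Φ_hasDerivAt_xx (t x : ℝ) (ht : 0 < t) :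
    HasDerivAt (fun y => 1 / π * heatSum 1 (π / 2) (t, y)) (-(1 / π * heatSum 2 0 (t, x))) x := by
  refine ((heatSum_hasDerivAt_snd 1 (π / 2) t x ht).const_mul (1 / π)).congr_deriv ?_
  have : π / 2 + π / 2 = 0 + π := by ring
  rw [this, heatSum_add_pi]
  ring

lemma Φ_deriv_deriv (a b t x : ℝ) (ht : 0 < t) :
    deriv (deriv (fun y => a * Φ t y * b)) x = a * (-(1 / π * heatSum 2 0 (t, x))) * b := by
  have : deriv (fun y => a * Φ t y * b) = fun y => a * (1 / π * heatSum 1 (π / 2) (t, y)) * b := by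
    ext y
    exact (((Φ_hasDerivAt_x t y ht).const_mul a).mul_const b).deriv
  rw [this]
  exact (((Φ_hasDerivAt_xx t x ht).const_mul a).mul_const b).deriv

lemma Φ_periodic (t x : ℝ) : Φ t (x + 2 * π) = Φ t x := by
  unfold Φ
  congr 3
  ext n
  have : ((n : ℝ) + 1) * (x + 2 * π) = ((n : ℝ) + 1) * x + ((n + 1 : ℕ) : ℝ) * (2 * π) := by
    push_cast
    ring
  rw [this, Real.cos_add_nat_mul_two_pi]

lemma Φ_contDiffOn : ContDiffOn ℝ (⊤ : ℕ∞) (fun p : ℝ × ℝ => Φ p.1 p.2) {p : ℝ × ℝ | 0 < p.1} := by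
  simp only [Φ_eq]
  exact contDiffOn_const.add (contDiffOn_const.mul (heatSum_contDiffOn 0 0))

/-- `Φ̃` is infinitely differentiable on `(0,∞) × ℝ³`, is `2π`-periodic in each of the three
space variables, and satisfies the heat equation `∂ₜΦ̃ = ΔΦ̃` pointwise on `(0,∞) × ℝ³`,
where `Δ` is the Laplacian in the three space variables. -/
theorem statement_17 :
    ContDiffOn ℝ (⊤ : ℕ∞) (fun p : ℝ × ℝ × ℝ × ℝ => Φ₃ p.1 p.2.1 p.2.2.1 p.2.2.2)
      (Set.Ioi (0 : ℝ) ×ˢ (Set.univ : Set (ℝ × ℝ × ℝ))) ∧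
    (∀ t x₁ x₂ x₃ : ℝ, 0 < t →
      Φ₃ t (x₁ + 2 * π) x₂ x₃ = Φ₃ t x₁ x₂ x₃ ∧
      Φ₃ t x₁ (x₂ + 2 * π) x₃ = Φ₃ t x₁ x₂ x₃ ∧
      Φ₃ t x₁ x₂ (x₃ + 2 * π) = Φ₃ t x₁ x₂ x₃) ∧
    (∀ t x₁ x₂ x₃ : ℝ, 0 < t →
      deriv (fun s : ℝ => Φ₃ s x₁ x₂ x₃) t
        = deriv (deriv (fun y : ℝ => Φ₃ t y x₂ x₃)) x₁
          + deriv (deriv (fun y : ℝ => Φ₃ t x₁ y x₃)) x₂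
          + deriv (deriv (fun y : ℝ => Φ₃ t x₁ x₂ y)) x₃) := by
  refine ⟨?_, ?_, ?_⟩
  · unfold Φ₃
    have hg : ∀ g : ℝ × ℝ × ℝ × ℝ → ℝ, ContDiff ℝ (⊤ : ℕ∞) g →
        ContDiffOn ℝ (⊤ : ℕ∞) (fun p : ℝ × ℝ × ℝ × ℝ => Φ p.1 (g p))
          (Set.Ioi (0 : ℝ) ×ˢ (Set.univ : Set (ℝ × ℝ × ℝ))) := by
      intro g hg
      exact Φ_contDiffOn.comp (contDiff_fst.prodMk hg).contDiffOn (fun p hp => hp.1)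
    exact ((hg _ (by fun_prop)).mul (hg _ (by fun_prop))).mul (hg _ (by fun_prop))
  · intro t x₁ x₂ x₃ _
    simp only [Φ₃, Φ_periodic, and_self]
  · intro t x₁ x₂ x₃ ht
    have e0 := (((Φ_hasDerivAt_t t x₁ ht).mul (Φ_hasDerivAt_t t x₂ ht)).mul
      (Φ_hasDerivAt_t t x₃ ht)).deriv
    have e1 := Φ_deriv_deriv 1 (Φ t x₂ * Φ t x₃) t x₁ ht
    have e2 := Φ_deriv_deriv (Φ t x₁) (Φ t x₃) t x₂ ht
    have e3 := Φ_deriv_deriv (Φ t x₁ * Φ t x₂) 1 t x₃ ht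
    simp only [one_mul, ← mul_assoc] at e1
    simp only [mul_one] at e3
    unfold Φ₃
    rw [e2, e3]
    refine Eq.trans e0 ?_
    rw [e1]
    simp only [Pi.mul_apply]
    ring
end
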